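/- Every smooth function germ u : (ℝ²,0) → ℝ in variables (ξ,t) can be written as u(ξ,t) = a(ξ, t²) + t·b(ξ, t²) for smooth function germs a, b. -/

import Mathlib

open MeasureTheory Filter Topology
open scoped ContDiff

/-- A smooth function on the line all of whose derivatives are bounded. -/
structure BoundedSmooth {F : Type*} [NormedAddCommGroup F] [NormedSpace ℝ F] (g : ℝ → F) :
    Prop where
  contDiff : ContDiff ℝ ∞ g
  bound : ∀ k : ℕ, ∃ C, ∀ x, ‖iteratedDeriv k g x‖ ≤ C

namespace BoundedSmooth

variable {F : Type*} [NormedAddCommGroup F] [NormedSpace ℝ F] {g : ℝ → F}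

theorem deriv (hg : BoundedSmooth g) : BoundedSmooth (deriv g) where
  contDiff := (contDiff_infty_iff_deriv.1 hg.contDiff).2
  bound k := by
    obtain ⟨C, hC⟩ := hg.bound (k + 1)
    exact ⟨C, fun x => by simpa only [iteratedDeriv_succ'] using hC x⟩

theorem norm_le (hg : BoundedSmooth g) : ∃ C, ∀ x, ‖g x‖ ≤ C := by
  simpa using hg.bound 0

theorem hasDerivAt (hg : BoundedSmooth g) (x : ℝ) : HasDerivAt g (_root_.deriv g x) x :=
  (hg.contDiff.differentiable (by simp) x).hasDerivAt

theorem ofReal {g : ℝ → ℝ} (hg : BoundedSmooth g) : BoundedSmooth fun x => (g x : ℂ) where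
  contDiff := Complex.ofRealCLM.contDiff.comp hg.contDiff
  bound k := by
    obtain ⟨C, hC⟩ := hg.bound k
    refine ⟨C, fun x => ?_⟩
    rw [← norm_iteratedFDeriv_eq_norm_iteratedDeriv]
    have := Complex.ofRealLI.norm_iteratedFDeriv_comp_left (f := g) (x := x) (n := ∞) (i := k)
      hg.contDiff.contDiffAt (mod_cast le_top)
    refine (this.trans_le ?_)
    rw [norm_iteratedFDeriv_eq_norm_iteratedDeriv]
    exact hC x

end BoundedSmooth

theorem boundedSmooth_cexp_mul_I : BoundedSmooth fun x : ℝ => Complex.exp (x * Complex.I) where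
  contDiff := by
    have : ContDiff ℝ ∞ fun x : ℝ => (x : ℂ) := Complex.ofRealCLM.contDiff
    fun_prop
  bound k := by
    refine ⟨1, fun x => le_of_eq ?_⟩
    have h : ∀ k, iteratedDeriv k (fun x : ℝ => Complex.exp (x * Complex.I)) =
        fun x : ℝ => Complex.I ^ k * Complex.exp (x * Complex.I) := by
      intro k
      induction k with
      | zero => simp
      | succ k ih =>
        rw [iteratedDeriv_succ, ih]
        ext x
        have h1 : HasDerivAt (fun x : ℝ => (x : ℂ) * Complex.I) (1 * Complex.I) x :=
          (Complex.ofRealCLM.hasDerivAt).mul_const _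
        rw [(h1.cexp.const_mul _).deriv]
        ring
    simp [h, Complex.norm_exp_ofReal_mul_I]

section Kernel

variable {Y : Type*} [MeasurableSpace Y] {μ : Measure Y} {α β : Y → ℝ}

theorem integrable_mul_kernel (hα : Measurable α) (hβ : Measurable β) {f : Y → ℂ} {G E : ℝ → ℂ}
    (hf : Integrable f μ) (hG : BoundedSmooth G) (hE : BoundedSmooth E) (p : ℝ × ℝ) :
    Integrable (fun y => f y * (G (α y * p.1) * E (β y * p.2))) μ := by
  obtain ⟨C, hC⟩ := hG.norm_le
  obtain ⟨D, hD⟩ := hE.norm_le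
  have hC0 : 0 ≤ C := (norm_nonneg _).trans (hC 0)
  refine hf.mul_bdd (c := C * D) ?_ (ae_of_all _ fun y => ?_)
  · exact ((hG.contDiff.continuous.measurable.comp (hα.mul_const _)).mul
      (hE.contDiff.continuous.measurable.comp (hβ.mul_const _))).aestronglyMeasurable
  · rw [norm_mul]
    exact mul_le_mul (hC _) (hD _) (norm_nonneg _) hC0

/-- Superpositions of the products `G (α ξ) * E (β s)` against a weight with finite moments
are smooth. -/
theorem contDiff_integral_mul_kernel (hα : Measurable α) (hβ : Measurable β) (n : ℕ) :
    ∀ {f : Y → ℂ} {G E : ℝ → ℂ},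
      (∀ i j : ℕ, Integrable (fun y => (α y : ℂ) ^ i * (β y : ℂ) ^ j * f y) μ) →
      BoundedSmooth G → BoundedSmooth E →
      ContDiff ℝ n fun p : ℝ × ℝ => ∫ y, f y * (G (α y * p.1) * E (β y * p.2)) ∂μ := by
  have key : ∀ {f : Y → ℂ} {G E : ℝ → ℂ},
      (∀ i j : ℕ, Integrable (fun y => (α y : ℂ) ^ i * (β y : ℂ) ^ j * f y) μ) →
      BoundedSmooth G → BoundedSmooth E → ∀ p : ℝ × ℝ,
      HasFDerivAt (fun p : ℝ × ℝ => ∫ y, f y * (G (α y * p.1) * E (β y * p.2)) ∂μ)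
        ((∫ y, (α y * f y) * (deriv G (α y * p.1) * E (β y * p.2)) ∂μ) •
            (Complex.ofRealCLM ∘L ContinuousLinearMap.fst ℝ ℝ ℝ) +
          (∫ y, (β y * f y) * (G (α y * p.1) * deriv E (β y * p.2)) ∂μ) •
            (Complex.ofRealCLM ∘L ContinuousLinearMap.snd ℝ ℝ ℝ)) p := by
    intro f G E hf hG hE p
    have hf0 : Integrable f μ := by simpa using hf 0 0
    have hf1 : Integrable (fun y => (α y : ℂ) * f y) μ := by simpa using hf 1 0
    have hf2 : Integrable (fun y => (β y : ℂ) * f y) μ := by simpa using hf 0 1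
    set L₁ := Complex.ofRealCLM ∘L ContinuousLinearMap.fst ℝ ℝ ℝ with hL₁
    set L₂ := Complex.ofRealCLM ∘L ContinuousLinearMap.snd ℝ ℝ ℝ with hL₂
    have i1 := fun p => integrable_mul_kernel hα hβ hf1 hG.deriv hE p
    have i2 := fun p => integrable_mul_kernel hα hβ hf2 hG hE.deriv p
    obtain ⟨A, hA⟩ := hG.norm_le
    obtain ⟨A', hA'⟩ := hG.deriv.norm_le
    obtain ⟨B, hB⟩ := hE.norm_le
    obtain ⟨B', hB'⟩ := hE.deriv.norm_le
    have hA0 : 0 ≤ A := (norm_nonneg _).trans (hA 0)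
    have hA0' : 0 ≤ A' := (norm_nonneg _).trans (hA' 0)
    have := hasFDerivAt_integral_of_dominated_of_fderiv_le (𝕜 := ℝ) (μ := μ) (x₀ := p)
      (F := fun (p : ℝ × ℝ) y => f y * (G (α y * p.1) * E (β y * p.2)))
      (F' := fun (p : ℝ × ℝ) y =>
        ((α y * f y) * (deriv G (α y * p.1) * E (β y * p.2))) • L₁ +
        ((β y * f y) * (G (α y * p.1) * deriv E (β y * p.2))) • L₂)
      (bound := fun y => ‖α y * f y‖ * (A' * B) * ‖L₁‖ + ‖β y * f y‖ * (A * B') * ‖L₂‖)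
      univ_mem
      (.of_forall fun p => (integrable_mul_kernel hα hβ hf0 hG hE p).aestronglyMeasurable)
      (integrable_mul_kernel hα hβ hf0 hG hE p)
      (((i1 p).smul_const L₁).add ((i2 p).smul_const L₂)).aestronglyMeasurable
      (ae_of_all _ fun y p _ => ?_)
      (((hf1.norm.mul_const _).mul_const _).add ((hf2.norm.mul_const _).mul_const _))
      (ae_of_all _ fun y p _ => ?_)
    · rwa [integral_add ((i1 p).smul_const L₁) ((i2 p).smul_const L₂), integral_smul_const,
        integral_smul_const] at this
    · refine (norm_add_le _ _).trans (add_le_add ?_ ?_)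
      · rw [norm_smul, norm_mul, norm_mul (deriv G _)]
        gcongr
        exacts [hA' _, hB _]
      · rw [norm_smul, norm_mul, norm_mul (G _)]
        gcongr
        exacts [hA _, hB' _]
    · have h1 : HasFDerivAt (fun p : ℝ × ℝ => G (α y * p.1)) _ p :=
        ((hG.hasDerivAt (α y * p.1)).hasFDerivAt).comp p
          ((ContinuousLinearMap.fst ℝ ℝ ℝ).hasFDerivAt.const_mul (α y))
      have h2 : HasFDerivAt (fun p : ℝ × ℝ => E (β y * p.2)) _ p :=
        ((hE.hasDerivAt (β y * p.2)).hasFDerivAt).comp p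
          ((ContinuousLinearMap.snd ℝ ℝ ℝ).hasFDerivAt.const_mul (β y))
      refine ((h1.mul h2).const_mul (f y)).congr_fderiv ?_
      ext <;> simp [hL₁, hL₂] <;> ring
  induction n with
  | zero =>
    intro f G E hf hG hE
    exact contDiff_zero.2 (continuous_iff_continuousAt.2 fun p => (key hf hG hE p).continuousAt)
  | succ n ih =>
    intro f G E hf hG hE
    push_cast
    refine contDiff_succ_iff_fderiv.2
      ⟨fun p => (key hf hG hE p).differentiableAt, by simp, ?_⟩
    rw [funext fun p => (key hf hG hE p).fderiv]
    refine .add (.smul (ih (fun i j => ?_) hG.deriv hE) contDiff_const)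
      (.smul (ih (fun i j => ?_) hG hE.deriv) contDiff_const)
    · convert hf (i + 1) j using 2
      ring
    · convert hf i (j + 1) using 2
      ring

end Kernel

/-- The entire function `r ↦ cos √r`. -/
theorem exists_contDiff_comp_sq_eq_cos :
    ∃ e : ℝ → ℝ, ContDiff ℝ ∞ e ∧ ∀ x, e (x ^ 2) = Real.cos x := by
  set c : ℕ → ℝ := fun n => (-1) ^ n / (2 * n).factorial with hc
  have hrad : (FormalMultilinearSeries.ofScalars ℝ c).radius = ⊤ := by
    refine FormalMultilinearSeries.ofScalars_radius_eq_top_of_tendsto ℝ c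
      (.of_forall fun n => by positivity) ?_
    have h : (fun n : ℕ => ‖c n.succ‖ / ‖c n‖) =
        fun n : ℕ => 1 / ((2 * n + 2 : ℝ) * (2 * n + 1)) := by
      ext n
      have : ((2 * n).factorial : ℝ) ≠ 0 := by positivity
      simp only [hc, norm_div, norm_pow, norm_neg, norm_one, one_pow, Nat.succ_eq_add_one,
        RCLike.norm_natCast, show 2 * (n + 1) = 2 * n + 1 + 1 by ring, Nat.factorial_succ]
      push_cast
      field_simp
      ring
    rw [h]
    refine squeeze_zero (fun n => by positivity) (fun n => ?_)
      tendsto_one_div_add_atTop_nhds_zero_nat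
    gcongr
    nlinarith [(Nat.cast_nonneg n : (0 : ℝ) ≤ n)]
  refine ⟨(FormalMultilinearSeries.ofScalars ℝ c).sum, ?_, fun x => ?_⟩
  · have h := (FormalMultilinearSeries.ofScalars ℝ c).hasFPowerSeriesOnBall
      (by rw [hrad]; exact ENNReal.zero_lt_top)
    rw [hrad] at h
    refine AnalyticOnNhd.contDiff fun x _ => h.analyticAt_of_mem (by simp)
  · rw [Real.cos_eq_tsum]
    refine (FormalMultilinearSeries.ofScalars_sum_eq c (x ^ 2)).trans ?_
    refine tsum_congr fun n => ?_
    simp only [hc, smul_eq_mul, ← pow_mul]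
    ring

/-- `r ↦ cos √r`, modified on the negative half line, is smooth with bounded derivatives. -/
theorem exists_boundedSmooth_comp_sq_eq_cos :
    ∃ E : ℝ → ℝ, BoundedSmooth E ∧ ∀ x, E (x ^ 2) = Real.cos x := by
  obtain ⟨e, he, hcos⟩ := exists_contDiff_comp_sq_eq_cos
  set E : ℝ → ℝ := fun r => Real.smoothTransition (r + 1) * e r with hEdef
  have hE : ContDiff ℝ ∞ E :=
    (Real.smoothTransition.contDiff.comp (contDiff_id.add contDiff_const)).mul he
  have hEcos : ∀ x, E (x ^ 2) = Real.cos x := fun x => by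
    simp only [hEdef]
    rw [Real.smoothTransition.one_of_one_le (by nlinarith [sq_nonneg x]), one_mul, hcos]
  have hEzero : ∀ r < -1, E r = 0 := fun r hr => by
    simp only [hEdef]
    rw [Real.smoothTransition.zero_of_nonpos (by linarith), zero_mul]
  have hD : ∀ k r, HasDerivAt (iteratedDeriv k E) (iteratedDeriv (k + 1) E r) r := fun k r => by
    rw [iteratedDeriv_succ]
    exact (hE.differentiable_iteratedDeriv k (mod_cast WithTop.coe_lt_top _) r).hasDerivAt
  have hDsq : ∀ k x, HasDerivAt (fun x : ℝ => iteratedDeriv k E (x ^ 2))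
      (iteratedDeriv (k + 1) E (x ^ 2) * (2 * x)) x := fun k x => by
    simpa [Function.comp_def] using (hD k (x ^ 2)).comp x (hasDerivAt_pow 2 x)
  have hsin : ∀ x, 2 * x * iteratedDeriv 1 E (x ^ 2) = -Real.sin x := fun x => by
    have h2 := (Real.hasDerivAt_cos x).congr_of_eventuallyEq (.of_forall hEcos)
    have := (hDsq 0 x).unique (by simpa only [iteratedDeriv_zero] using h2)
    rw [zero_add] at this
    linarith
  have hode : ∀ k : ℕ, ∀ r > 0, 4 * r * iteratedDeriv (k + 2) E r +
      (4 * k + 2) * iteratedDeriv (k + 1) E r + iteratedDeriv k E r = 0 := by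
    intro k
    induction k with
    | zero =>
      intro r hr
      obtain ⟨x, rfl⟩ : ∃ x : ℝ, x ^ 2 = r := ⟨√r, Real.sq_sqrt hr.le⟩
      have h1 : HasDerivAt (fun x : ℝ => 2 * x * iteratedDeriv 1 E (x ^ 2)) _ x :=
        ((hasDerivAt_id x).const_mul 2).mul (hDsq 1 x)
      have h2 := (Real.hasDerivAt_sin x).neg.congr_of_eventuallyEq (.of_forall hsin)
      have := h1.unique h2
      have h3 := hEcos x
      simp at this h3 ⊢
      linarith
    | succ k ih =>
      intro r hr
      have h1 := ((((hasDerivAt_id r).const_mul 4).mul (hD (k + 2) r)).add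
        ((hD (k + 1) r).const_mul (4 * k + 2 : ℝ))).add (hD k r)
      have h2 := (hasDerivAt_const r (0 : ℝ)).congr_of_eventuallyEq
        ((eventually_gt_nhds hr).mono fun s hs => ih s hs)
      have := h1.unique h2
      simp at this ⊢
      linarith
  have hpos : ∀ k : ℕ, ∃ C, ∀ r ≥ 1, |iteratedDeriv k E r| ≤ C := by
    intro k
    induction k using Nat.twoStepInduction with
    | zero =>
      refine ⟨1, fun r hr => ?_⟩
      rw [iteratedDeriv_zero, ← Real.sq_sqrt (zero_le_one.trans hr), hEcos]
      exact Real.abs_cos_le_one _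
    | one =>
      refine ⟨1, fun r hr => ?_⟩
      have hs : 1 ≤ √r := Real.one_le_sqrt.2 hr
      have h := hsin √r
      rw [Real.sq_sqrt (zero_le_one.trans hr)] at h
      have h' := Real.abs_sin_le_one √r
      rw [← abs_neg, ← h, abs_mul, abs_of_pos (by positivity : (0 : ℝ) < 2 * √r)] at h'
      nlinarith [abs_nonneg (iteratedDeriv 1 E r)]
    | more k ih₀ ih₁ =>
      obtain ⟨C₀, h₀⟩ := ih₀
      obtain ⟨C₁, h₁⟩ := ih₁
      refine ⟨(4 * k + 2) * C₁ + C₀, fun r hr => ?_⟩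
      have h : 4 * r * iteratedDeriv (k + 2) E r =
          -((4 * k + 2) * iteratedDeriv (k + 1) E r + iteratedDeriv k E r) := by
        linarith [hode k r (by linarith)]
      have h' : 4 * r * |iteratedDeriv (k + 2) E r| ≤ (4 * k + 2) * C₁ + C₀ := by
        rw [← abs_of_pos (by linarith : 0 < 4 * r), ← abs_mul, h, abs_neg]
        refine (abs_add_le _ _).trans (add_le_add ?_ (h₀ r hr))
        rw [abs_mul, abs_of_pos (by positivity : (0 : ℝ) < 4 * k + 2)]
        gcongr
        exact h₁ r hr
      nlinarith [abs_nonneg (iteratedDeriv (k + 2) E r)]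
  refine ⟨E, ⟨hE, fun k => ?_⟩, hEcos⟩
  obtain ⟨C, hC⟩ := hpos k
  obtain ⟨D, hD'⟩ := (isCompact_Icc (a := (-2 : ℝ)) (b := 1)).exists_bound_of_continuousOn
    (hE.continuous_iteratedDeriv k (mod_cast le_top)).continuousOn
  refine ⟨max (max C D) 0, fun r => ?_⟩
  rcases le_total 1 r with h1 | h1
  · exact (hC r h1).trans (by simp)
  rcases le_or_gt (-2) r with h2 | h2
  · exact (hD' r ⟨h2, h1⟩).trans (by simp)
  · have : E =ᶠ[𝓝 r] fun _ => 0 :=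
      (eventually_lt_nhds (by linarith : r < -1)).mono hEzero
    rw [this.iteratedDeriv_eq k]
    simp [iteratedDeriv_fun_const_zero]

theorem SchwartzMap.integrable_coord_pow_mul (f : SchwartzMap (EuclideanSpace ℝ (Fin 2)) ℂ)
    (i j : ℕ) : Integrable fun y => (y 0 : ℂ) ^ i * (y 1 : ℂ) ^ j * f y := by
  refine (f.integrable_pow_mul volume (i + j)).mono' ?_ (ae_of_all _ fun y => ?_)
  · have := f.continuous
    exact Continuous.aestronglyMeasurable (by fun_prop)
  · rw [norm_mul, norm_mul, norm_pow, norm_pow, Complex.norm_real, Complex.norm_real, pow_add]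
    gcongr
    exacts [PiLp.norm_apply_le y 0, PiLp.norm_apply_le y 1]

theorem SchwartzMap.exists_contDiff_eq_add_mul_comp_sq
    (φ : SchwartzMap (EuclideanSpace ℝ (Fin 2)) ℂ) :
    ∃ a b : ℝ × ℝ → ℂ, ContDiff ℝ ∞ a ∧ ContDiff ℝ ∞ b ∧
      ∀ ξ t : ℝ, φ !₂[ξ, t] = a (ξ, t ^ 2) + t * b (ξ, t ^ 2) := by
  obtain ⟨E, hE, hEcos⟩ := exists_boundedSmooth_comp_sq_eq_cos
  have hEsin : ∀ x, Real.sin x = -2 * x * deriv E (x ^ 2) := fun x => by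
    have h1 : HasDerivAt (fun x : ℝ => E (x ^ 2)) (deriv E (x ^ 2) * (2 * x)) x := by
      simpa [Function.comp_def] using (hE.hasDerivAt (x ^ 2)).comp x (hasDerivAt_pow 2 x)
    have := h1.unique ((Real.hasDerivAt_cos x).congr_of_eventuallyEq (.of_forall hEcos))
    linarith
  obtain ⟨f, hf⟩ : ∃ f : SchwartzMap (EuclideanSpace ℝ (Fin 2)) ℂ,
      FourierTransformInv.fourierInv f = φ :=
    ⟨FourierTransform.fourier φ, FourierTransform.fourierInv_fourier_eq φ⟩
  set α : EuclideanSpace ℝ (Fin 2) → ℝ := fun y => 2 * Real.pi * y 0 with hα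
  set β : EuclideanSpace ℝ (Fin 2) → ℝ := fun y => (2 * Real.pi * y 1) ^ 2 with hβ
  set g : EuclideanSpace ℝ (Fin 2) → ℂ := fun y => -4 * Real.pi * y 1 * Complex.I * f y with hg
  set G : ℝ → ℂ := fun x => Complex.exp (x * Complex.I) with hG
  have hαm : Measurable α := by fun_prop
  have hβm : Measurable β := by fun_prop
  have hfm : ∀ i j : ℕ, Integrable fun y => (α y : ℂ) ^ i * (β y : ℂ) ^ j * f y := fun i j => by
    convert! (f.integrable_coord_pow_mul i (2 * j)).const_mul
      ((2 * Real.pi : ℂ) ^ i * ((2 * Real.pi : ℂ) ^ 2) ^ j) using 2 with y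
    simp only [hα, hβ]
    push_cast
    ring
  have hgm : ∀ i j : ℕ, Integrable fun y => (α y : ℂ) ^ i * (β y : ℂ) ^ j * g y := fun i j => by
    convert! (f.integrable_coord_pow_mul i (2 * j + 1)).const_mul
      ((2 * Real.pi : ℂ) ^ i * ((2 * Real.pi : ℂ) ^ 2) ^ j * (-4 * Real.pi * Complex.I))
      using 2 with y
    simp only [hα, hβ, hg]
    push_cast
    ring
  have hGb : BoundedSmooth G := boundedSmooth_cexp_mul_I
  refine ⟨fun p => ∫ y, f y * (G (α y * p.1) * ((E (β y * p.2) : ℝ) : ℂ)),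
    fun p => ∫ y, g y * (G (α y * p.1) * ((deriv E (β y * p.2) : ℝ) : ℂ)),
    contDiff_infty.2 fun n => contDiff_integral_mul_kernel hαm hβm n hfm hGb hE.ofReal,
    contDiff_infty.2 fun n => contDiff_integral_mul_kernel hαm hβm n hgm hGb hE.deriv.ofReal,
    fun ξ t => ?_⟩
  have hf0 : Integrable f := f.integrable
  have hg0 : Integrable g := by simpa using hgm 0 0
  rw [← integral_const_mul, ← integral_add
    (integrable_mul_kernel hαm hβm hf0 hGb hE.ofReal (ξ, t ^ 2))
    ((integrable_mul_kernel hαm hβm hg0 hGb hE.deriv.ofReal (ξ, t ^ 2)).const_mul _)]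
  rw [← hf, SchwartzMap.fourierInv_coe,
    Real.fourierInv_eq']
  refine integral_congr_ae (ae_of_all _ fun y => ?_)
  have hx : β y * t ^ 2 = (2 * Real.pi * y 1 * t) ^ 2 := by simp only [hβ]; ring
  have hsplit : ((2 * Real.pi * inner ℝ y !₂[ξ, t] : ℝ) : ℂ) * Complex.I =
      ((α y * ξ : ℝ) : ℂ) * Complex.I + ((2 * Real.pi * y 1 * t : ℝ) : ℂ) * Complex.I := by
    simp [hα, PiLp.inner_apply, Fin.sum_univ_two]
    ring
  simp only [smul_eq_mul]
  rw [hsplit, Complex.exp_add, Complex.exp_mul_I (((2 * Real.pi * y 1 * t : ℝ) : ℂ)),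
    ← Complex.ofReal_cos, ← Complex.ofReal_sin, ← hEcos, hEsin, hx]
  simp only [hg, hG]
  push_cast
  ring

/-- Whitney division: every smooth function germ `u : (ℝ²,0) → ℝ` in the
variables `(ξ,t)` can be written as `u(ξ,t) = a(ξ,t²) + t·b(ξ,t²)` for smooth
function germs `a, b`. -/
theorem stmt9 (u : ℝ × ℝ → ℝ) (hu : ContDiff ℝ (⊤ : ℕ∞) u) :
    ∃ a b : ℝ × ℝ → ℝ, ContDiff ℝ (⊤ : ℕ∞) a ∧ ContDiff ℝ (⊤ : ℕ∞) b ∧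
      ∀ᶠ p in nhds (0 : ℝ × ℝ),
        u p = a (p.1, p.2 ^ 2) + p.2 * b (p.1, p.2 ^ 2) := by
  let χ : ContDiffBump (0 : EuclideanSpace ℝ (Fin 2)) := default
  have hsmooth : ContDiff ℝ ∞ fun v : EuclideanSpace ℝ (Fin 2) =>
      ((χ v * u (v 0, v 1) : ℝ) : ℂ) :=
    Complex.ofRealCLM.contDiff.comp (χ.contDiff.mul (hu.comp (by fun_prop)))
  have hsupp : HasCompactSupport fun v : EuclideanSpace ℝ (Fin 2) =>
      ((χ v * u (v 0, v 1) : ℝ) : ℂ) :=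
    (χ.hasCompactSupport.mul_right).comp_left Complex.ofReal_zero
  obtain ⟨a, b, ha, hb, hab⟩ :=
    (hsupp.toSchwartzMap hsmooth).exists_contDiff_eq_add_mul_comp_sq
  refine ⟨fun p => (a p).re, fun p => (b p).re, Complex.reCLM.contDiff.comp ha,
    Complex.reCLM.contDiff.comp hb, ?_⟩
  have hcont : Tendsto (fun p : ℝ × ℝ => !₂[p.1, p.2]) (𝓝 0) (𝓝 0) := by
    have : Continuous fun p : ℝ × ℝ => !₂[p.1, p.2] := by fun_prop
    refine this.tendsto' 0 0 ?_
    ext i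
    fin_cases i <;> simp
  filter_upwards [hcont.eventually χ.eventuallyEq_one] with p hp
  have h := congrArg Complex.re (hab p.1 p.2)
  simp at h hp
  simpa [hp] using h
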